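/- arXiv:2507.17067 — 4 statements merged into one kernel-verified Lean document; each statement's English description precedes it below -/
import Mathlib

section
/- Let λ ∈ 𝔥*. The map τ : Ŵ_[λ] → Λ/Λ_r defined by τ(w) = wλ − λ + Λ_r is a group homomorphism whose kernel is exactly W_[λ]. Consequently W_[λ] is a normal subgroup of Ŵ_[λ], τ induces an injective group homomorphism Ŵ_[λ]/W_[λ] ↪ Λ/Λ_r, and in particular the quotient group Ŵ_[λ]/W_[λ] is abelian. -/
/-!
The displacement `d w = wλ − λ` is a cocycle: `d (w₁w₂) = w₁ (d w₂) + d w₁`. A reflection moves a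
weight `x` by the integral multiple `⟨x, α∨⟩ α` of a root, so the Weyl group acts trivially on
`Λ/Λ_r`. Hence `w₁ (d w₂) ≡ d w₂` modulo `Λ_r` whenever `d w₂ ∈ Λ`, and the cocycle becomes a
homomorphism on `Ŵ_[λ]` with values in the abelian group `V/Λ_r`.
-/

noncomputable section

variable {V : Type*} [AddCommGroup V] [Module ℂ V]

/-- `x` lies in the weight lattice `Λ = {x : ⟨x, α∨⟩ ∈ ℤ for all α ∈ Φ}`. -/
def InWeightLattice (Φ : Finset V) (coroot : V → (V →ₗ[ℂ] ℂ)) (x : V) : Prop :=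
  ∀ α ∈ Φ, ∃ n : ℤ, coroot α x = (n : ℂ)

section Displacement

variable {G A : Type*} [Group G] [AddCommGroup A] [DistribMulAction G A] {L R : AddSubgroup A}

/-- The elements of `G` that fix `a` modulo the `G`-stable subgroup `L`. For the Weyl group acting
on `𝔥*`, with `L = Λ` and `a = λ`, this is `Ŵ_[λ]`. -/
def stabilizerMod (L : AddSubgroup A) (hL : ∀ g : G, ∀ x ∈ L, g • x ∈ L) (a : A) : Subgroup G where
  carrier := {g | g • a - a ∈ L}
  one_mem' := by simp
  mul_mem' {g h} hg hh := by
    have hsum : g • (h • a - a) + (g • a - a) ∈ L := L.add_mem (hL g _ hh) hg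
    rwa [smul_sub, sub_add_sub_cancel, ← mul_smul] at hsum
  inv_mem' {g} hg := by
    have hback : g⁻¹ • (g • a - a) ∈ L := hL g⁻¹ _ hg
    rw [smul_sub, inv_smul_smul] at hback
    exact sub_mem_comm_iff.1 hback

/-- The homomorphism `τ : g ↦ g • a - a + R` for a group that acts trivially on `L/R`. It takes
values in `A ⧸ R`, which contains `L/R`; the target is written multiplicatively to make `τ` a
`MonoidHom`. -/
def displacementHom (hL : ∀ g : G, ∀ x ∈ L, g • x ∈ L) (hLR : ∀ g : G, ∀ x ∈ L, g • x - x ∈ R)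
    (a : A) : stabilizerMod L hL a →* Multiplicative (A ⧸ R) :=
  MonoidHom.mk' (fun g => .ofAdd (QuotientAddGroup.mk ((g : G) • a - a))) fun g h => by
    rw [← ofAdd_add, ← QuotientAddGroup.mk_add]
    refine congrArg _ ((QuotientAddGroup.eq_iff_sub_mem).2 ?_)
    have hcocycle : ((g * h : stabilizerMod L hL a) : G) • a - a =
        (g : G) • ((h : G) • a - a) + ((g : G) • a - a) := by
      rw [Subgroup.coe_mul, mul_smul, smul_sub, sub_add_sub_cancel]
    rw [hcocycle, add_comm ((g : G) • a - a), add_sub_add_right_eq_sub]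
    exact hLR g _ h.2

theorem mem_ker_displacementHom {hL : ∀ g : G, ∀ x ∈ L, g • x ∈ L}
    {hLR : ∀ g : G, ∀ x ∈ L, g • x - x ∈ R} {a : A} {g : stabilizerMod L hL a} :
    g ∈ (displacementHom hL hLR a).ker ↔ (g : G) • a - a ∈ R :=
  QuotientAddGroup.eq_zero_iff _

end Displacement

section WeightLattice

variable {K M : Type*} [CommRing K] [AddCommGroup M] [Module K M]

/-- The weight lattice `Λ = {x : ⟨x, α∨⟩ ∈ ℤ for all α ∈ Φ}` of `InWeightLattice`, as a subgroup and
over an arbitrary commutative ring of scalars, where `ℤ` is replaced by its image in `K`. -/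
def weightLattice (Φ : Set M) (coroot : M → Module.Dual K M) : AddSubgroup M where
  carrier := {x | ∀ α ∈ Φ, ∃ n : ℤ, coroot α x = n}
  zero_mem' _ _ := ⟨0, by simp⟩
  add_mem' hx hy α hα := by
    obtain ⟨m, hm⟩ := hx α hα
    obtain ⟨n, hn⟩ := hy α hα
    exact ⟨m + n, by rw [map_add, hm, hn, Int.cast_add]⟩
  neg_mem' hx α hα := by
    obtain ⟨n, hn⟩ := hx α hα
    exact ⟨-n, by rw [map_neg, hn, Int.cast_neg]⟩

theorem mem_weightLattice_iff_inWeightLattice {Φ : Finset V} {coroot : V → Module.Dual ℂ V}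
    {x : V} : x ∈ weightLattice (Φ : Set V) coroot ↔ InWeightLattice Φ coroot x :=
  Iff.rfl

variable {Φ : Set M} {coroot : M → Module.Dual K M} {s : M → (M ≃ₗ[K] M)}

theorem closure_le_weightLattice (hcrys : ∀ α ∈ Φ, ∀ β ∈ Φ, ∃ n : ℤ, coroot α β = n) :
    AddSubgroup.closure Φ ≤ weightLattice Φ coroot :=
  (AddSubgroup.closure_le _).2 fun β hβ α hα => hcrys α hα β hβ

theorem mem_weightLattice_of_sub_mem_closure
    (hcrys : ∀ α ∈ Φ, ∀ β ∈ Φ, ∃ n : ℤ, coroot α β = n) {x y : M}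
    (hyx : y - x ∈ AddSubgroup.closure Φ) (hx : x ∈ weightLattice Φ coroot) :
    y ∈ weightLattice Φ coroot :=
  sub_add_cancel y x ▸ add_mem (closure_le_weightLattice hcrys hyx) hx

theorem reflection_apply_sub_mem_closure (hs : ∀ α ∈ Φ, ∀ x, s α x = x - coroot α x • α) {α x : M}
    (hα : α ∈ Φ) (hx : x ∈ weightLattice Φ coroot) : s α x - x ∈ AddSubgroup.closure Φ := by
  obtain ⟨n, hn⟩ := hx α hα
  rw [hs α hα, hn, Int.cast_smul_eq_zsmul, sub_sub_cancel_left]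
  exact neg_mem (zsmul_mem (AddSubgroup.subset_closure hα) n)

theorem weyl_apply_sub_mem_closure (h2 : ∀ α ∈ Φ, coroot α α = 2)
    (hcrys : ∀ α ∈ Φ, ∀ β ∈ Φ, ∃ n : ℤ, coroot α β = n)
    (hs : ∀ α ∈ Φ, ∀ x, s α x = x - coroot α x • α) {w : M ≃ₗ[K] M}
    (hw : w ∈ Subgroup.closure (s '' Φ)) {x : M} (hx : x ∈ weightLattice Φ coroot) :
    w x - x ∈ AddSubgroup.closure Φ := by
  induction hw using Subgroup.closure_induction'' generalizing x with
  | one => simp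
  | mem r hr =>
    obtain ⟨α, hα, rfl⟩ := hr
    exact reflection_apply_sub_mem_closure hs hα hx
  | inv_mem r hr =>
    obtain ⟨α, hα, rfl⟩ := hr
    have hrefl : s α = Module.reflection (h2 α hα) := LinearEquiv.ext (hs α hα)
    rw [hrefl, Module.reflection_inv, ← hrefl]
    exact reflection_apply_sub_mem_closure hs hα hx
  | mul u v _ _ ihu ihv =>
    have hvx : v x ∈ weightLattice Φ coroot :=
      mem_weightLattice_of_sub_mem_closure hcrys (ihv hx) hx
    simpa only [LinearEquiv.mul_apply, sub_add_sub_cancel] using add_mem (ihu hvx) (ihv hx)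

theorem tau_hom_kernel_integralWeylGroup_general
    (Φ : Set M) (coroot : M → Module.Dual K M) (s : M → (M ≃ₗ[K] M))
    (W : Subgroup (M ≃ₗ[K] M)) (Λr : AddSubgroup M)
    (h2 : ∀ α ∈ Φ, coroot α α = 2)
    (hcrys : ∀ α ∈ Φ, ∀ β ∈ Φ, ∃ n : ℤ, coroot α β = n)
    (hs : ∀ α ∈ Φ, ∀ x : M, s α x = x - coroot α x • α)
    (hW : W = Subgroup.closure (s '' Φ))
    (hΛr : Λr = AddSubgroup.closure Φ)
    (lam : M) :
    (∀ w₁ ∈ W, ∀ w₂ ∈ W,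
        w₁ lam - lam ∈ weightLattice Φ coroot → w₂ lam - lam ∈ weightLattice Φ coroot →
        (QuotientAddGroup.mk ((w₁ * w₂) lam - lam) : M ⧸ Λr) =
          QuotientAddGroup.mk (w₁ lam - lam) + QuotientAddGroup.mk (w₂ lam - lam))
    ∧ (∀ w ∈ W, w lam - lam ∈ weightLattice Φ coroot →
        ((QuotientAddGroup.mk (w lam - lam) : M ⧸ Λr) = 0 ↔ w lam - lam ∈ Λr))
    ∧ (∀ w ∈ W, w lam - lam ∈ weightLattice Φ coroot →
        ∀ u ∈ W, u lam - lam ∈ Λr → (w * u * w⁻¹) lam - lam ∈ Λr)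
    ∧ (∀ w₁ ∈ W, ∀ w₂ ∈ W,
        w₁ lam - lam ∈ weightLattice Φ coroot → w₂ lam - lam ∈ weightLattice Φ coroot →
        (QuotientAddGroup.mk (w₁ lam - lam) : M ⧸ Λr) = QuotientAddGroup.mk (w₂ lam - lam) →
        (w₂⁻¹ * w₁) lam - lam ∈ Λr)
    ∧ (∀ w₁ ∈ W, ∀ w₂ ∈ W,
        w₁ lam - lam ∈ weightLattice Φ coroot → w₂ lam - lam ∈ weightLattice Φ coroot →
        (w₁ * w₂ * w₁⁻¹ * w₂⁻¹) lam - lam ∈ Λr) := by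
  subst hW hΛr
  have hLR (w : Subgroup.closure (s '' Φ)) (x : M) (hx : x ∈ weightLattice Φ coroot) :
      w • x - x ∈ AddSubgroup.closure Φ := weyl_apply_sub_mem_closure h2 hcrys hs w.2 hx
  have hL (w : Subgroup.closure (s '' Φ)) (x : M) (hx : x ∈ weightLattice Φ coroot) :
      w • x ∈ weightLattice Φ coroot := mem_weightLattice_of_sub_mem_closure hcrys (hLR w x hx) hx
  let Ŵ := stabilizerMod (weightLattice Φ coroot) hL lam
  let τ := displacementHom hL hLR lam
  have hker (w : Ŵ) : w ∈ τ.ker ↔ (w : M ≃ₗ[K] M) lam - lam ∈ AddSubgroup.closure Φ :=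
    mem_ker_displacementHom
  let ofMem {w} hw h : Ŵ := ⟨⟨w, hw⟩, h⟩
  refine ⟨fun w₁ hw₁ w₂ hw₂ h₁ h₂ => τ.map_mul (ofMem hw₁ h₁) (ofMem hw₂ h₂),
    fun w hw h => hker (ofMem hw h), fun w hw h u hu hur => ?normal,
    fun w₁ hw₁ w₂ hw₂ h₁ h₂ heq => ?injective, fun w₁ hw₁ w₂ hw₂ h₁ h₂ => ?abelian⟩
  case normal =>
    let u' : Ŵ := ofMem hu (closure_le_weightLattice hcrys hur)
    exact (hker _).1 (τ.normal_ker.conj_mem u' ((hker u').2 hur) (ofMem hw h))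
  case injective =>
    exact (hker _).1 ((τ.eq_iff (x := ofMem hw₁ h₁) (y := ofMem hw₂ h₂)).1 heq)
  case abelian =>
    exact (hker _).1 (Abelianization.commutator_subset_ker τ (Subgroup.commutator_mem_commutator
      (Subgroup.mem_top (ofMem hw₁ h₁)) (Subgroup.mem_top (ofMem hw₂ h₂))))

end WeightLattice

/-- Let `λ ∈ 𝔥*`.  The map `τ : Ŵ_[λ] → Λ/Λ_r`, `τ(w) = wλ − λ + Λ_r`, is a
group homomorphism whose kernel is exactly `W_[λ]`.  Consequently `W_[λ]` is a normal subgroup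
of `Ŵ_[λ]`, `τ` induces an injective group homomorphism `Ŵ_[λ]/W_[λ] ↪ Λ/Λ_r`, and in
particular the quotient `Ŵ_[λ]/W_[λ]` is abelian.

Setting: `Φ` is a finite reduced crystallographic root system in the complex vector space `V`,
with coroot pairing `coroot`, reflections `s`, and Weyl group `W` (the subgroup of `GL(V)`
generated by the reflections).  `Λ` is the weight lattice (membership recorded by
`InWeightLattice Φ coroot`), `Λr` is the root lattice (the `ℤ`-span of `Φ`); `Λ_r ⊆ Λ` and
both are `W`-stable.  For `w ∈ W`: `w ∈ Ŵ_[λ]` iff `wλ − λ ∈ Λ`, and `w ∈ W_[λ]` iff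
`wλ − λ ∈ Λ_r`.  The coset `τ w = wλ − λ + Λ_r` is realized in `V ⧸ Λr`. -/
theorem tau_hom_kernel_integralWeylGroup
    (Φ : Finset V) (coroot : V → (V →ₗ[ℂ] ℂ)) (s : V → (V ≃ₗ[ℂ] V))
    (W : Subgroup (V ≃ₗ[ℂ] V)) (Λr : AddSubgroup V)
    (hΦ0 : (0 : V) ∉ Φ)
    (hspan : Submodule.span ℂ (Φ : Set V) = ⊤)
    (h2 : ∀ α ∈ Φ, coroot α α = 2)
    (hred : ∀ α ∈ Φ, ∀ c : ℂ, c • α ∈ (Φ : Set V) → c = 1 ∨ c = -1)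
    (hcrys : ∀ α ∈ Φ, ∀ β ∈ Φ, ∃ n : ℤ, coroot α β = (n : ℂ))
    (hs : ∀ α ∈ Φ, ∀ x : V, s α x = x - coroot α x • α)
    (hsΦ : ∀ α ∈ Φ, ∀ β ∈ Φ, s α β ∈ Φ)
    (hW : W = Subgroup.closure (s '' (Φ : Set V)))
    (hΛr : Λr = AddSubgroup.closure (Φ : Set V))
    (hsub : ∀ x ∈ Λr, InWeightLattice Φ coroot x)
    (hWΛ : ∀ w ∈ W, ∀ x : V, InWeightLattice Φ coroot x → InWeightLattice Φ coroot (w x))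
    (hWΛr : ∀ w ∈ W, ∀ x ∈ Λr, w x ∈ Λr)
    (lam : V) :
    -- (1) `τ` is a group homomorphism `Ŵ_[λ] → Λ/Λ_r`:
    (∀ w₁ ∈ W, ∀ w₂ ∈ W,
        InWeightLattice Φ coroot (w₁ lam - lam) → InWeightLattice Φ coroot (w₂ lam - lam) →
        (QuotientAddGroup.mk ((w₁ * w₂) lam - lam) : V ⧸ Λr) =
          QuotientAddGroup.mk (w₁ lam - lam) + QuotientAddGroup.mk (w₂ lam - lam))
    ∧ -- (2) the kernel of `τ` is exactly `W_[λ]`: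
    (∀ w ∈ W, InWeightLattice Φ coroot (w lam - lam) →
        ((QuotientAddGroup.mk (w lam - lam) : V ⧸ Λr) = 0 ↔ w lam - lam ∈ Λr))
    ∧ -- (3) `W_[λ]` is a normal subgroup of `Ŵ_[λ]`:
    (∀ w ∈ W, InWeightLattice Φ coroot (w lam - lam) →
        ∀ u ∈ W, u lam - lam ∈ Λr → (w * u * w⁻¹) lam - lam ∈ Λr)
    ∧ -- (4) `τ` induces an injective homomorphism `Ŵ_[λ]/W_[λ] ↪ Λ/Λ_r`:
    (∀ w₁ ∈ W, ∀ w₂ ∈ W,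
        InWeightLattice Φ coroot (w₁ lam - lam) → InWeightLattice Φ coroot (w₂ lam - lam) →
        (QuotientAddGroup.mk (w₁ lam - lam) : V ⧸ Λr) = QuotientAddGroup.mk (w₂ lam - lam) →
        (w₂⁻¹ * w₁) lam - lam ∈ Λr)
    ∧ -- (5) the quotient `Ŵ_[λ]/W_[λ]` is abelian:
    (∀ w₁ ∈ W, ∀ w₂ ∈ W,
        InWeightLattice Φ coroot (w₁ lam - lam) → InWeightLattice Φ coroot (w₂ lam - lam) →
        (w₁ * w₂ * w₁⁻¹ * w₂⁻¹) lam - lam ∈ Λr) := by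
  simpa only [mem_weightLattice_iff_inWeightLattice] using
    tau_hom_kernel_integralWeylGroup_general (Φ : Set V) coroot s W Λr h2 hcrys hs hW hΛr lam

end
end

section
/- Let λ ∈ 𝔥* and let α ∈ Δ_[λ] be a simple root of the integral root system Φ_[λ]. Then there exists δ ∈ Λ such that ⟨δ, α∨⟩ = 0 and ⟨δ, β∨⟩ > 0 for every β ∈ Δ_[λ] with β ≠ α. -/
/-!
In a finite crystallographic root system each coroot is a nonzero multiple of its root, under the
identification given by the canonical invariant form; so coroots attached to linearly independent
roots are linearly independent, and a vector can be found with prescribed pairings against them.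
All pairings between roots and coroots being integers, this can be done over `ℚ`: prescribing `0`
at `α` and `1` on the rest of `Δ` gives a rational combination of roots, with rational pairings
against all the coroots. Multiplying it by a common denominator puts it into the weight lattice
and preserves the signs of the prescribed values.
-/

noncomputable section

variable {V : Type*} [AddCommGroup V] [Module ℂ V]

lemma exists_pos_natCast_mul_eq_intCast {ι : Type*} [Finite ι] (q : ι → ℚ) :
    ∃ N : ℕ, 0 < N ∧ ∀ i, ∃ n : ℤ, N * q i = n := by
  have := Fintype.ofFinite ι
  refine ⟨∏ i, (q i).den, Finset.prod_pos fun i _ => (q i).den_pos, fun i => ?_⟩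
  obtain ⟨k, hk⟩ := Finset.dvd_prod_of_mem (fun i => (q i).den) (Finset.mem_univ i)
  refine ⟨k * (q i).num, ?_⟩
  rw [hk]
  push_cast
  rw [← (q i).den_mul_eq_num]
  ring

lemma exists_dual_eq_of_linearIndepOn {ι K N : Type*} [Field K] [AddCommGroup N] [Module K N]
    {v : ι → N} {s : Set ι} (hv : LinearIndepOn K v s) (u : ι → K) :
    ∃ f : Module.Dual K N, ∀ i ∈ s, f (v i) = u i := by
  let b := Module.Basis.span hv
  obtain ⟨f, hf⟩ := (b.constr K fun i : s => u i).exists_extend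
  refine ⟨f, fun i hi => ?_⟩
  have b_coe : (b ⟨i, hi⟩ : N) = v i := congrArg Subtype.val (Module.Basis.span_apply hv ⟨i, hi⟩)
  simpa [b_coe] using LinearMap.congr_fun hf (b ⟨i, hi⟩)

section RootPairing

variable {ι K M N : Type*} [Field K] [AddCommGroup M] [Module K M] [AddCommGroup N] [Module K N]
  (P : RootPairing ι K M N) {s : Set ι}

lemma exists_coroot'_eq_of_linearIndepOn_root [Fintype ι] [NeZero (2 : K)] [P.IsRootSystem]
    [P.IsAnisotropic] (hs : LinearIndepOn K P.root s) (u : ι → K) :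
    ∃ x : M, ∀ i ∈ s, P.coroot' i x = u i := by
  obtain ⟨f, hf⟩ := exists_dual_eq_of_linearIndepOn (P.linearIndepOn_coroot_iff.mpr hs) u
  exact ⟨P.toPerfPair.symm f, fun i hi => by simpa using hf i hi⟩

lemma exists_integral_coroot'_eq_natCast_mul [Finite ι] [CharZero K] [P.IsCrystallographic]
    (hs : LinearIndepOn K P.root s) (u : ι → ℤ) :
    ∃ x : M, (∀ i, ∃ n : ℤ, P.coroot' i x = n) ∧
      ∃ m : ℕ, 0 < m ∧ ∀ i ∈ s, P.coroot' i x = m * u i := by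
  have := Fintype.ofFinite ι
  let : Module ℚ M := Module.compHom M (algebraMap ℚ K)
  let : Module ℚ N := Module.compHom N (algebraMap ℚ K)
  let Q := P.restrictScalars ℚ
  have coroot'_coe (i : ι) (y : Submodule.span ℚ (Set.range P.root)) :
      P.coroot' i y = (Q.coroot' i y : K) :=
    (P.restrictScalars_toLinearMap_apply_apply ℚ y (Q.coroot i)).symm
  have hsQ : LinearIndepOn ℚ Q.root s :=
    .of_comp (Submodule.subtype _) (hs.restrict_scalars' ℚ)
  obtain ⟨y, hy⟩ := exists_coroot'_eq_of_linearIndepOn_root Q hsQ fun i => u i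
  obtain ⟨m, hm, hmy⟩ := exists_pos_natCast_mul_eq_intCast fun i => Q.coroot' i y
  refine ⟨m • (y : M), fun i => ?_, m, hm, fun i hi => ?_⟩
  · obtain ⟨n, hn⟩ := hmy i
    refine ⟨n, ?_⟩
    rw [map_nsmul, coroot'_coe, nsmul_eq_mul]
    exact_mod_cast hn
  · rw [map_nsmul, coroot'_coe, hy i hi, nsmul_eq_mul, Rat.cast_intCast]

end RootPairing

section FiniteRootSet

open Module Submodule

variable {K E : Type*} [Field K] [CharZero K] [AddCommGroup E] [Module K E]
  {Φ : Set E} [Finite Φ] {coroot : E → Dual K E}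

lemma injOn_coroot_domRestrict_span (h2 : ∀ α ∈ Φ, coroot α α = 2)
    (hmaps : ∀ α ∈ Φ, Set.MapsTo (preReflection α (coroot α)) Φ Φ) :
    Set.InjOn (fun α => (coroot α).domRestrict (span K Φ)) Φ := by
  intro α hα β hβ h
  have : IsAddTorsionFree E := .of_isTorsionFree K E
  have coroot_eq {γ : E} (hγ : γ ∈ Φ) : coroot α γ = coroot β γ :=
    LinearMap.congr_fun h ⟨γ, subset_span hγ⟩
  exact eq_of_mapsTo_reflection_of_mem Φ.toFinite (h2 α hα) (h2 β hβ)
    ((coroot_eq hα).symm.trans (h2 α hα)) ((coroot_eq hβ).trans (h2 β hβ))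
    (hmaps α hα) (hmaps β hβ) hβ

/-- The root pairing of a finite set `Φ` of vectors with candidate coroots whose reflections
preserve `Φ`. Its weight space is `span K Φ` rather than `E`, because reflection stability
determines a coroot only through its restriction to that span. -/
def rootPairingOfMapsTo (h2 : ∀ α ∈ Φ, coroot α α = 2)
    (hmaps : ∀ α ∈ Φ, Set.MapsTo (preReflection α (coroot α)) Φ Φ) :
    RootPairing Φ K (span K Φ) (Dual K (span K Φ)) :=
  have : Module.Finite K (span K Φ) := .span_of_finite K Φ.toFinite
  .mk'' (Dual.eval K (span K Φ))
    (root := Set.embeddingOfSubset _ _ subset_span)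
    (coroot := ⟨fun α => (coroot α).domRestrict _,
      (injOn_coroot_domRestrict_span h2 hmaps).injective⟩)
    (hp := fun α => h2 α α.2)
    (hs := by
      rintro α _ ⟨β, rfl⟩
      exact ⟨⟨_, hmaps α α.2 β.2⟩, rfl⟩)
    (hsp := (congrArg (span K) (Set.range_inclusion subset_span)).trans span_span_coe_preimage)

lemma exists_mem_span_coroot_eq_natCast_mul (h2 : ∀ α ∈ Φ, coroot α α = 2)
    (hcrys : ∀ α ∈ Φ, ∀ β ∈ Φ, ∃ n : ℤ, coroot α β = n)
    (hmaps : ∀ α ∈ Φ, Set.MapsTo (preReflection α (coroot α)) Φ Φ)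
    {Δ : Set E} (hΔ : Δ ⊆ Φ) (hΔind : LinearIndepOn K id Δ) (u : E → ℤ) :
    ∃ δ ∈ span K Φ, (∀ α ∈ Φ, ∃ n : ℤ, coroot α δ = n) ∧
      ∃ m : ℕ, 0 < m ∧ ∀ β ∈ Δ, coroot β δ = m * u β := by
  let P := rootPairingOfMapsTo h2 hmaps
  have : P.IsCrystallographic := ⟨fun α β => (hcrys β β.2 α α.2).imp fun _ hn => hn.symm⟩
  have hs : LinearIndepOn K P.root ((↑) ⁻¹' Δ) :=
    .of_comp (span K Φ).subtype <|
      (hΔind.mono (Set.image_preimage_subset _ _)).comp_of_image Subtype.val_injective.injOn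
  obtain ⟨x, hint, m, hm, hx⟩ := exists_integral_coroot'_eq_natCast_mul P hs fun i => u i
  exact ⟨x, x.2, fun α hα => hint ⟨α, hα⟩, m, hm, fun β hβ => hx ⟨β, hΔ hβ⟩ hβ⟩

theorem exists_weight_orthogonal_to_one_simple_root_general (h2 : ∀ α ∈ Φ, coroot α α = 2)
    (hcrys : ∀ α ∈ Φ, ∀ β ∈ Φ, ∃ n : ℤ, coroot α β = n)
    (hmaps : ∀ α ∈ Φ, Set.MapsTo (preReflection α (coroot α)) Φ Φ)
    {Δ : Set E} (hΔ : Δ ⊆ Φ) (hΔind : LinearIndepOn K id Δ) {α : E} (hα : α ∈ Δ) :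
    ∃ δ ∈ span K Φ, (∀ γ ∈ Φ, ∃ n : ℤ, coroot γ δ = n) ∧
      coroot α δ = 0 ∧ ∀ β ∈ Δ, β ≠ α → ∃ n : ℤ, 0 < n ∧ coroot β δ = n := by
  classical
  obtain ⟨δ, hδ, hint, m, hm, hΔδ⟩ :=
    exists_mem_span_coroot_eq_natCast_mul h2 hcrys hmaps hΔ hΔind fun β => if β = α then 0 else 1
  refine ⟨δ, hδ, hint, by simp [hΔδ α hα], fun β hβ hne => ⟨m, mod_cast hm, ?_⟩⟩
  simp [hΔδ β hβ, hne]

end FiniteRootSet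

/-- Let `λ ∈ 𝔥*` and let `α ∈ Δ_[λ]` be a simple root of the integral root
system `Φ_[λ] = {α ∈ Φ : ⟨λ, α∨⟩ ∈ ℤ}`.  Then there exists `δ ∈ Λ` such that `⟨δ, α∨⟩ = 0`
and `⟨δ, β∨⟩ > 0` for every `β ∈ Δ_[λ]` with `β ≠ α`.

Setting: `Φ` is a finite reduced crystallographic root system in `V` with positive system
`Φpos`, coroot pairing `coroot`, reflections `s`, and Weyl group `W`; `Λ` is the weight
lattice (membership recorded by `InWeightLattice Φ coroot`).  `Δ` is the unique system of
simple roots of `Φ_[λ]` contained in `Φ⁺`, recorded by the hypotheses below.  Since `δ ∈ Λ`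
and `β ∈ Φ_[λ]`, the pairing `⟨δ, β∨⟩` is an integer, and positivity is expressed by saying
that it is a positive integer. -/
theorem exists_weight_orthogonal_to_one_simple_root
    (Φ Φpos Δ : Finset V) (coroot : V → (V →ₗ[ℂ] ℂ)) (s : V → (V ≃ₗ[ℂ] V))
    (W : Subgroup (V ≃ₗ[ℂ] V))
    (hΦ0 : (0 : V) ∉ Φ)
    (hspan : Submodule.span ℂ (Φ : Set V) = ⊤)
    (h2 : ∀ α ∈ Φ, coroot α α = 2)
    (hred : ∀ α ∈ Φ, ∀ c : ℂ, c • α ∈ (Φ : Set V) → c = 1 ∨ c = -1)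
    (hcrys : ∀ α ∈ Φ, ∀ β ∈ Φ, ∃ n : ℤ, coroot α β = (n : ℂ))
    (hs : ∀ α ∈ Φ, ∀ x : V, s α x = x - coroot α x • α)
    (hsΦ : ∀ α ∈ Φ, ∀ β ∈ Φ, s α β ∈ Φ)
    (hW : W = Subgroup.closure (s '' (Φ : Set V)))
    (hpos : Φpos ⊆ Φ)
    (hsplit : ∀ α ∈ Φ, (α ∈ Φpos ↔ ¬(-α ∈ Φpos)))
    (lam : V)
    -- `Δ` is the system of simple roots of `Φ_[λ]` contained in `Φ⁺`:
    (hΔsub : ∀ α ∈ Δ, α ∈ Φ ∧ α ∈ Φpos ∧ ∃ n : ℤ, coroot α lam = (n : ℂ))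
    (hΔind : LinearIndependent ℂ (fun a : {x // x ∈ Δ} => (a : V)))
    (hΔgen : ∀ β ∈ Φ, β ∈ Φpos → (∃ n : ℤ, coroot β lam = (n : ℂ)) →
      ∃ c : V → ℕ, β = ∑ α ∈ Δ, (c α : ℤ) • α)
    -- an arbitrary element `α` of `Δ_[λ]`:
    (α : V) (hα : α ∈ Δ) :
    ∃ δ : V,
      InWeightLattice Φ coroot δ ∧
      coroot α δ = 0 ∧
      (∀ β ∈ Δ, β ≠ α → ∃ n : ℤ, 0 < n ∧ coroot β δ = (n : ℂ)) := by
  have hmaps (β) (hβ : β ∈ Φ) : Set.MapsTo (Module.preReflection β (coroot β)) (Φ : Set V) Φ :=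
    fun γ hγ => by
      simpa only [Module.preReflection_apply, hs β hβ] using Finset.mem_coe.mpr (hsΦ β hβ γ hγ)
  obtain ⟨δ, -, hδ⟩ := exists_weight_orthogonal_to_one_simple_root_general (Φ := (Φ : Set V)) h2
    hcrys hmaps (fun β hβ => (hΔsub β hβ).1) hΔind hα
  exact ⟨δ, hδ⟩

end
end

section
/- Let (R, 𝔪) be a commutative Noetherian local ring which is complete for the 𝔪-adic topology, and let M and N be finitely generated R-modules. Then the canonical R-module map M ⊗_R N → lim_k (M/𝔪^k M ⊗_R N/𝔪^k N), induced by the reduction maps M ⊗_R N → M/𝔪^k M ⊗_R N/𝔪^k N into the inverse limit of the system with the natural surjective transition maps M/𝔪^{k+1}M ⊗_R N/𝔪^{k+1}N → M/𝔪^k M ⊗_R N/𝔪^k N, is an isomorphism. -/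
/-!
By right exactness of the tensor product, the surjection `M ⊗ N → M/I^k M ⊗ N/I^k N` has kernel
`I^k (M ⊗ N)`. The inverse limit is therefore the `I`-adic completion of `M ⊗ N`, and the canonical
map is an isomorphism exactly when `M ⊗ N` is `I`-adically complete. Over a complete Noetherian ring
every finitely generated module `P` is complete: it is separated by Krull's intersection theorem, as
`I` lies in the Jacobson radical, and `P → P̂` is surjective because `R → R̂` and `R̂ ⊗ P → P̂` are.
-/

open scoped TensorProduct

noncomputable section

variable {R : Type*} [CommRing R]

/-- The quotient `M/𝔪^k M` of a module `M` by the `k`-th power of an ideal `𝔪`. -/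
abbrev ModQuot (m : Ideal R) (M : Type*) [AddCommGroup M] [Module R M] (k : ℕ) :=
  M ⧸ ((m ^ k) • (⊤ : Submodule R M))

/-- The canonical reduction map `M/𝔪^{k+1} M → M/𝔪^k M`. -/
def modQuotTrans (m : Ideal R) (M : Type*) [AddCommGroup M] [Module R M] (k : ℕ) :
    ModQuot m M (k + 1) →ₗ[R] ModQuot m M k :=
  Submodule.mapQ _ _ LinearMap.id
    (by
      intro x hx
      simp only [Submodule.mem_comap, LinearMap.id_coe, id_eq]
      exact Submodule.smul_mono_left (Ideal.pow_le_pow_right (Nat.le_succ k)) hx)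

/-- The natural surjective transition map
`M/𝔪^{k+1}M ⊗ N/𝔪^{k+1}N → M/𝔪^k M ⊗ N/𝔪^k N`. -/
def tensorQuotTrans (m : Ideal R) (M N : Type*) [AddCommGroup M] [Module R M]
    [AddCommGroup N] [Module R N] (k : ℕ) :
    (ModQuot m M (k + 1)) ⊗[R] (ModQuot m N (k + 1)) →ₗ[R]
      (ModQuot m M k) ⊗[R] (ModQuot m N k) :=
  TensorProduct.map (modQuotTrans m M k) (modQuotTrans m N k)

/-- The canonical map `M ⊗_R N → M/𝔪^k M ⊗_R N/𝔪^k N` induced by the reductions. -/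
def tensorQuotMap (m : Ideal R) (M N : Type*) [AddCommGroup M] [Module R M]
    [AddCommGroup N] [Module R N] (k : ℕ) :
    M ⊗[R] N →ₗ[R] (ModQuot m M k) ⊗[R] (ModQuot m N k) :=
  TensorProduct.map (Submodule.mkQ _) (Submodule.mkQ _)

section FiniteModules

variable (I : Ideal R) (P : Type*) [AddCommGroup P] [Module R P] [Module.Finite R P]

lemma isPrecomplete_of_finite [IsPrecomplete I R] : IsPrecomplete I P := by
  have of_eq_comp : (AdicCompletion.of I P : P → AdicCompletion I P) =
      AdicCompletion.ofTensorProduct I P ∘ (AdicCompletion.of I R).rTensor P ∘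
        (TensorProduct.lid R P).symm := by
    funext x
    simp only [Function.comp_apply, TensorProduct.lid_symm_apply, LinearMap.rTensor_tmul,
      AdicCompletion.ofTensorProduct_tmul]
    exact (one_smul (AdicCompletion I R) _).symm
  rw [← AdicCompletion.of_surjective_iff, of_eq_comp]
  exact (AdicCompletion.ofTensorProduct_surjective_of_finite I P).comp <|
    (LinearMap.rTensor_surjective P (AdicCompletion.of_surjective I R)).comp
      (LinearEquiv.surjective _)

lemma isAdicComplete_of_finite [IsNoetherianRing R] [IsAdicComplete I R] : IsAdicComplete I P where
  toIsHausdorff := .of_le_jacobson I P (IsAdicComplete.le_jacobson_bot I)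
  toIsPrecomplete := isPrecomplete_of_finite I P

end FiniteModules

section InverseLimit

lemma apply_eq_iff_sModEq_ker {P Q : Type*} [AddCommGroup P] [Module R P] [AddCommGroup Q]
    [Module R Q] (φ : P →ₗ[R] Q) {x y : P} : φ x = φ y ↔ x ≡ y [SMOD LinearMap.ker φ] := by
  rw [SModEq.sub_mem, LinearMap.sub_mem_ker_iff]

variable {I : Ideal R} {P : Type*} [AddCommGroup P] [Module R P]
  {Q : ℕ → Type*} [∀ k, AddCommGroup (Q k)] [∀ k, Module R (Q k)]
  {φ : ∀ k, P →ₗ[R] Q k} {τ : ∀ k, Q (k + 1) →ₗ[R] Q k}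

lemma pi_injective_iff_isHausdorff (ker_eq : ∀ k, LinearMap.ker (φ k) = I ^ k • ⊤) :
    Function.Injective (LinearMap.pi φ) ↔ IsHausdorff I P := by
  simp only [← LinearMap.ker_eq_bot, LinearMap.ker_pi, ker_eq, isHausdorff_iff, SModEq.zero,
    Submodule.eq_bot_iff, Submodule.mem_iInf]

lemma apply_eq_of_le_of_compatible (compat : ∀ k, τ k ∘ₗ φ (k + 1) = φ k)
    {f : ∀ k, Q k} (hf : ∀ k, τ k (f (k + 1)) = f k) {i j : ℕ} (hij : i ≤ j) {x : P}
    (hx : φ j x = f j) : φ i x = f i := by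
  induction hij using Nat.decreasingInduction with
  | self => exact hx
  | of_succ k _ ih => rw [← compat, LinearMap.comp_apply, ih, hf]

lemma range_pi_eq_compatible_iff_isPrecomplete (surj : ∀ k, Function.Surjective (φ k))
    (ker_eq : ∀ k, LinearMap.ker (φ k) = I ^ k • ⊤)
    (compat : ∀ k, τ k ∘ₗ φ (k + 1) = φ k) :
    Set.range (LinearMap.pi φ) = {f | ∀ k, τ k (f (k + 1)) = f k} ↔ IsPrecomplete I P := by
  have range_subset : Set.range (LinearMap.pi φ) ⊆ {f | ∀ k, τ k (f (k + 1)) = f k} := by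
    rintro _ ⟨x, rfl⟩ k
    exact LinearMap.congr_fun (compat k) x
  rw [Set.Subset.antisymm_iff, and_iff_right range_subset]
  simp only [isPrecomplete_iff, ← ker_eq, ← apply_eq_iff_sModEq_ker]
  constructor
  · intro lift x cauchy
    obtain ⟨L, hL⟩ := @lift (fun k => φ k (x k)) fun k =>
      (LinearMap.congr_fun (compat k) _).trans (cauchy k.le_succ).symm
    exact ⟨L, fun k => (congrFun hL k).symm⟩
  · intro complete f hf
    choose x hx using fun k => surj k (f k)
    obtain ⟨L, hL⟩ := complete x fun {i j} hij =>
      (hx i).trans (apply_eq_of_le_of_compatible compat hf hij (hx j)).symm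
    exact ⟨L, funext fun k => (hL k).symm.trans (hx k)⟩

end InverseLimit

section IdealSMul

variable {M N P : Type*} [AddCommGroup M] [Module R M] [AddCommGroup N] [Module R N]
  [AddCommGroup P] [Module R P]

lemma map₂_smul_right (f : M →ₗ[R] N →ₗ[R] P) (I : Ideal R) (p : Submodule R M)
    (q : Submodule R N) : Submodule.map₂ f p (I • q) = I • Submodule.map₂ f p q := by
  simp only [Submodule.map₂, Submodule.map_smul'', Submodule.smul_iSup]

lemma map₂_smul_left (f : M →ₗ[R] N →ₗ[R] P) (I : Ideal R) (p : Submodule R M)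
    (q : Submodule R N) : Submodule.map₂ f (I • p) q = I • Submodule.map₂ f p q := by
  rw [← Submodule.map₂_flip, map₂_smul_right, Submodule.map₂_flip]

end IdealSMul

section Tensor

variable (I : Ideal R) (M N : Type*) [AddCommGroup M] [Module R M] [AddCommGroup N] [Module R N]

lemma range_lTensor_subtype_smul_top :
    LinearMap.range ((I • ⊤ : Submodule R N).subtype.lTensor M) = I • ⊤ := by
  rw [LinearMap.lTensor, TensorProduct.range_map, LinearMap.range_id, Submodule.range_subtype,
    map₂_smul_right, TensorProduct.map₂_mk_top_top_eq_top]

lemma range_rTensor_subtype_smul_top :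
    LinearMap.range ((I • ⊤ : Submodule R M).subtype.rTensor N) = I • ⊤ := by
  rw [LinearMap.rTensor, TensorProduct.range_map, LinearMap.range_id, Submodule.range_subtype,
    map₂_smul_left, TensorProduct.map₂_mk_top_top_eq_top]

lemma ker_map_mkQ_smul_top :
    LinearMap.ker (TensorProduct.map (I • ⊤ : Submodule R M).mkQ (I • ⊤ : Submodule R N).mkQ) =
      I • ⊤ := by
  rw [TensorProduct.map_ker (LinearMap.exact_subtype_mkQ _) (Submodule.mkQ_surjective _)
    (LinearMap.exact_subtype_mkQ _) (Submodule.mkQ_surjective _),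
    range_lTensor_subtype_smul_top, range_rTensor_subtype_smul_top, sup_idem]

lemma tensorQuotMap_surjective (k : ℕ) : Function.Surjective (tensorQuotMap I M N k) :=
  TensorProduct.map_surjective (Submodule.mkQ_surjective _) (Submodule.mkQ_surjective _)

lemma ker_tensorQuotMap (k : ℕ) : LinearMap.ker (tensorQuotMap I M N k) = I ^ k • ⊤ :=
  ker_map_mkQ_smul_top (I ^ k) M N

lemma tensorQuotTrans_comp_tensorQuotMap (k : ℕ) :
    tensorQuotTrans I M N k ∘ₗ tensorQuotMap I M N (k + 1) = tensorQuotMap I M N k :=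
  TensorProduct.ext' fun _ _ => rfl

lemma tensorProduct_bijective_onto_inverseLimit_iff_isAdicComplete :
    (Function.Injective (LinearMap.pi (tensorQuotMap I M N)) ∧
      Set.range (LinearMap.pi (tensorQuotMap I M N)) =
        {f | ∀ k, tensorQuotTrans I M N k (f (k + 1)) = f k}) ↔
      IsAdicComplete I (M ⊗[R] N) := by
  rw [pi_injective_iff_isHausdorff (ker_tensorQuotMap I M N),
    range_pi_eq_compatible_iff_isPrecomplete (tensorQuotMap_surjective I M N)
      (ker_tensorQuotMap I M N) (tensorQuotTrans_comp_tensorQuotMap I M N)]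
  exact (isAdicComplete_iff I (M ⊗[R] N)).symm

theorem tensorProduct_bijective_onto_inverseLimit_of_complete_local_general
    [IsNoetherianRing R] [IsAdicComplete I R] [Module.Finite R (M ⊗[R] N)] :
    Function.Injective (LinearMap.pi (tensorQuotMap I M N)) ∧
      Set.range (LinearMap.pi (tensorQuotMap I M N)) =
        {f | ∀ k, tensorQuotTrans I M N k (f (k + 1)) = f k} :=
  (tensorProduct_bijective_onto_inverseLimit_iff_isAdicComplete I M N).2
    (isAdicComplete_of_finite I (M ⊗[R] N))

end Tensor

/-- Let `(R, 𝔪)` be a commutative Noetherian local ring which is complete for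
the `𝔪`-adic topology, and let `M` and `N` be finitely generated `R`-modules.  Then the
canonical `R`-linear map `M ⊗_R N → lim_k (M/𝔪^k M ⊗_R N/𝔪^k N)` is an isomorphism; here the
inverse limit is realized as the submodule of the product `∏_k (M/𝔪^k M ⊗_R N/𝔪^k N)`
consisting of the sequences compatible with the natural transition maps, and the assertion is
that the canonical map is injective with image exactly this inverse limit. -/
theorem tensorProduct_bijective_onto_inverseLimit_of_complete_local
    (R : Type*) [CommRing R] [IsNoetherianRing R] [IsLocalRing R]
    [IsAdicComplete (IsLocalRing.maximalIdeal R) R]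
    (M N : Type*) [AddCommGroup M] [Module R M] [Module.Finite R M]
    [AddCommGroup N] [Module R N] [Module.Finite R N] :
    Function.Injective
        (LinearMap.pi (fun k : ℕ => tensorQuotMap (IsLocalRing.maximalIdeal R) M N k) :
          M ⊗[R] N →ₗ[R] Π k : ℕ,
            (ModQuot (IsLocalRing.maximalIdeal R) M k) ⊗[R]
              (ModQuot (IsLocalRing.maximalIdeal R) N k))
      ∧ Set.range
          (LinearMap.pi (fun k : ℕ => tensorQuotMap (IsLocalRing.maximalIdeal R) M N k) :
            M ⊗[R] N →ₗ[R] Π k : ℕ,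
              (ModQuot (IsLocalRing.maximalIdeal R) M k) ⊗[R]
                (ModQuot (IsLocalRing.maximalIdeal R) N k)) =
        {f | ∀ k : ℕ, tensorQuotTrans (IsLocalRing.maximalIdeal R) M N k (f (k + 1)) = f k} :=
  tensorProduct_bijective_onto_inverseLimit_of_complete_local_general
    (IsLocalRing.maximalIdeal R) M N

end
end

section
/- Let R be a commutative ring, let w and s be ring automorphisms of R, and set s' = w⁻¹ ∘ s ∘ w. Let R^s and R^{s'} denote the fixed subrings of s and s' respectively. Then there is an isomorphism of (R,R)-bimodules R_w ⊗_R (R ⊗_{R^s} R) ≅ (R ⊗_{R^{s'}} R) ⊗_R R_w. -/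
/-!
For a subring `S` of `R`, `a ⊗ b ↦ w⁻¹ b ⊗ w⁻¹ a` is a well-defined additive isomorphism
`R ⊗_S R ≃ R ⊗_{w⁻¹ S} R`, which turns the action on either factor into the action on the other,
twisted by `w⁻¹`. The outer tensor factors are harmless: the
left-hand `R_w` is balanced through its plain right action, and `w : R → R_w` is an isomorphism of
left `R`-modules. For `S = R^s` one has `w⁻¹ S = R^{s'}`, and the isomorphism is
`g ⊗ (a ⊗ b) ↦ (w⁻¹ b ⊗ w⁻¹ (g a)) ⊗ 1`.
-/

open scoped TensorProduct

noncomputable section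

/-- For a ring automorphism `u` of a commutative ring `R`, `Tw R u` is the underlying additive
group of `R`, regarded as the `(R,R)`-bimodule `R_u` whose *left* action is twisted through `u`
(`f · g = u f * g`) and whose right action is plain multiplication (`g · f = g * f`).
As the Lean `Module R` instance we install the twisted left action. -/
def Tw (R : Type*) [CommRing R] (_u : R ≃+* R) : Type _ := R

namespace Tw

variable {R : Type*} [CommRing R] (u : R ≃+* R)

instance : AddCommGroup (Tw R u) := inferInstanceAs (AddCommGroup R)

/-- The left `R`-action on `R_u`, twisted through `u` : `f • g = u f * g`. -/
instance : Module R (Tw R u) := Module.compHom R (u : R →+* R)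

end Tw

variable {R : Type*} [CommRing R]

/-- The fixed subring `R^u = {f ∈ R : u f = f}` of a ring automorphism `u`. -/
def fixedSubring (u : R ≃+* R) : Subring R :=
  RingHom.eqLocus (u : R →+* R) (RingHom.id R)

/-- The conjugated automorphism `s' = w⁻¹ ∘ s ∘ w`. -/
def conjAut (w s : R ≃+* R) : R ≃+* R := (w.trans s).trans w.symm

lemma conjAut_apply (w s : R ≃+* R) (x : R) : conjAut w s x = w.symm (s (w x)) := rfl

/-- Right multiplication by `f : R`, as an `R^S`-linear endomorphism of `R`. -/
def mulRightS (S : Subring R) (f : R) : R →ₗ[S] R where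
  toFun b := b * f
  map_add' a b := add_mul a b f
  map_smul' c b := by simp [smul_mul_assoc]

/-- The endomorphism of the `(R,R)`-bimodule `R ⊗_{S} R` (for a subring `S ⊆ R`) given by
right multiplication by `f` on the *second* tensor factor.  It is `R`-linear for the
`R`-module structure coming from the first tensor factor. -/
def mulSecond (S : Subring R) (f : R) :
    TensorProduct S R R →ₗ[R] TensorProduct S R R where
  toFun := LinearMap.lTensor R (mulRightS S f)
  map_add' x y := map_add _ x y
  map_smul' r x := by
    induction x using TensorProduct.induction_on with
    | zero => simp
    | tmul a b => simp [TensorProduct.smul_tmul', smul_eq_mul]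
    | add x y hx hy => simp only [smul_add, map_add, RingHom.id_apply] at *; rw [hx, hy]

@[simp]
lemma mulSecond_tmul (S : Subring R) (f a b : R) :
    mulSecond S f (a ⊗ₜ b) = a ⊗ₜ (b * f) := rfl

lemma comap_fixedSubring (w s : R ≃+* R) :
    (fixedSubring s).comap (w : R →+* R) = fixedSubring (conjAut w s) := by
  ext x
  exact (w.symm_apply_eq (x := s (w x)) (y := x)).symm

section SwapEquiv

variable {A B : Type*} [CommRing A] [CommRing B] (φ : A ≃+* B) {S : Subring A} {T : Subring B}
  (hφ : ∀ x, x ∈ S ↔ φ x ∈ T)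

/-- The additive isomorphism `A ⊗_S A ≃ B ⊗_T B`, `a ⊗ b ↦ φ b ⊗ φ a`, induced by a ring
isomorphism `φ : A ≃ B` that carries `S` onto `T`. The factors are exchanged because the right-hand
side of the bimodule isomorphism stores the second factor of `R ⊗_{R^{s'}} R` first. -/
def swapEquiv : A ⊗[S] A ≃+ B ⊗[T] B :=
  let σ : S ≃+* T := φ.restrict S T hφ
  have := RingHomInvPair.of_ringEquiv σ
  have := RingHomInvPair.of_ringEquiv_symm σ
  let φσ : A ≃ₛₗ[(σ : S →+* T)] B := { φ with map_smul' := fun c a => map_mul φ (c : A) a }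
  (TensorProduct.comm S A A).toAddEquiv.trans (TensorProduct.congr φσ φσ).toAddEquiv

@[simp]
lemma swapEquiv_tmul (a b : A) : swapEquiv φ hφ (a ⊗ₜ b) = φ b ⊗ₜ φ a := rfl

lemma swapEquiv_smul (f : A) (x : A ⊗[S] A) :
    swapEquiv φ hφ (f • x) = mulSecond T (φ f) (swapEquiv φ hφ x) := by
  induction x using TensorProduct.induction_on with
  | zero => simp
  | tmul a b => simp [TensorProduct.smul_tmul', mul_comm]
  | add x y hx hy => simp only [smul_add, map_add, hx, hy]

lemma swapEquiv_mulSecond (f : A) (x : A ⊗[S] A) :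
    swapEquiv φ hφ (mulSecond S f x) = φ f • swapEquiv φ hφ x := by
  induction x using TensorProduct.induction_on with
  | zero => simp
  | tmul a b => simp [TensorProduct.smul_tmul', mul_comm]
  | add x y hx hy => simp only [smul_add, map_add, hx, hy]

end SwapEquiv

lemma lid_lTensor {k M N : Type*} [CommSemiring k] [AddCommMonoid M] [Module k M]
    [AddCommMonoid N] [Module k N] (g : M →ₗ[k] N) (x : k ⊗[k] M) :
    TensorProduct.lid k N (g.lTensor k x) = g (TensorProduct.lid k M x) := by
  induction x using TensorProduct.induction_on with
  | zero => simp
  | tmul r m => simp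
  | add x y hx hy => simp only [map_add, hx, hy]

namespace Tw

variable {M N : Type*} [AddCommMonoid M] [Module R M] [AddCommMonoid N] [Module R N]

/-- The automorphism `u`, as an isomorphism of left `R`-modules from `R` to `R_u`. -/
def equivSelf (u : R ≃+* R) : R ≃ₗ[R] Tw R u :=
  { u.toAddEquiv with map_smul' := map_mul u }

variable (M) in
/-- The isomorphism `M ≃ M ⊗_R R_u`, `m ↦ m ⊗ 1`, of `R`-modules; the twist by `u` remains visible
only in the right action of `R_u`, which is not recorded here. -/
def tensorEquiv (u : R ≃+* R) : M ≃ₗ[R] M ⊗[R] Tw R u :=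
  (TensorProduct.rid R M).symm ≪≫ₗ TensorProduct.congr (.refl R M) (equivSelf u)

lemma rTensor_tensorEquiv (u : R ≃+* R) (g : M →ₗ[R] N) (m : M) :
    g.rTensor (Tw R u) (tensorEquiv M u m) = tensorEquiv N u (g m) := by
  simp [tensorEquiv]

end Tw

theorem tw_tensor_bimodule_iso_general (w : R ≃+* R) (S : Subring R) :
    ∃ e : R ⊗[R] (R ⊗[S] R) ≃+ (R ⊗[S.comap (w : R →+* R)] R) ⊗[R] Tw R w,
      (∀ f x, e (w f • x) = (mulSecond (S.comap (w : R →+* R)) f).rTensor (Tw R w) (e x)) ∧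
      (∀ f x, e ((mulSecond S f).lTensor R x) = w.symm f • e x) := by
  have mem_iff (x : R) : x ∈ S ↔ w.symm x ∈ S.comap (w : R →+* R) := by simp
  let e := ((TensorProduct.lid R _).toAddEquiv.trans (swapEquiv w.symm mem_iff)).trans
    (Tw.tensorEquiv _ w).toAddEquiv
  refine ⟨e, fun f x => ?left, fun f x => ?right⟩
  case left => simp [e, swapEquiv_smul, Tw.rTensor_tensorEquiv]
  case right => simp [e, lid_lTensor, swapEquiv_mulSecond]

/-- Let `R` be a commutative ring, let `w` and `s` be ring automorphisms of
`R`, and set `s' = w⁻¹ ∘ s ∘ w`.  Let `R^s` and `R^{s'}` be the fixed subrings.  Then there is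
an isomorphism of `(R,R)`-bimodules `R_w ⊗_R (R ⊗_{R^s} R) ≅ (R ⊗_{R^{s'}} R) ⊗_R R_w`.

Formalization of the two sides:
* The left-hand side is `TensorProduct R R (TensorProduct ↥(R^s) R R)`; the outer tensor
  product is balanced using the plain right action of `R_w` (so its left factor is `R` with the
  standard module structure) and the left action of `R ⊗_{R^s} R` on its first factor.  Its
  bimodule left action is `f • x` for `(w f) • x` via the canonical scalar action (i.e.
  `f·(g ⊗ a ⊗ b) = ((w f)g) ⊗ a ⊗ b`), and its bimodule right action is
  `mulSecond (R^s) f` on the inner tensor factor (i.e. `(g ⊗ a ⊗ b)·f = g ⊗ a ⊗ (bf)`).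
* The right-hand side is `TensorProduct R (TensorProduct ↥(R^{s'}) R R) (Tw R w)`, where the
  inner tensor factor records the bimodule `R ⊗_{R^{s'}} R` with its *second* (math) factor
  written first, so that the outer tensor product is balanced using the right action of
  `R ⊗_{R^{s'}} R` (on its second math factor) and the twisted left action of `R_w`.  Its
  bimodule left action (on the first math factor of `R ⊗_{R^{s'}} R`) is `mulSecond (R^{s'}) f`
  on the inner factor, and its bimodule right action (right multiplication on `R_w`) is
  `(w⁻¹ f) • x` via the canonical scalar action.

The conclusion produces an additive isomorphism intertwining the two left actions and the two
right actions, i.e. an isomorphism of `(R,R)`-bimodules. -/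
theorem tw_tensor_bimodule_iso
    (R : Type*) [CommRing R] (w s : R ≃+* R) :
    ∃ e : TensorProduct R R (TensorProduct ↥(fixedSubring s) R R) ≃+
          TensorProduct R (TensorProduct ↥(fixedSubring (conjAut w s)) R R) (Tw R w),
      -- `e` intertwines the left `R`-actions of the two bimodules:
      (∀ (f : R) (x : TensorProduct R R (TensorProduct ↥(fixedSubring s) R R)),
          e ((w f) • x) =
            (LinearMap.rTensor (Tw R w) (mulSecond (fixedSubring (conjAut w s)) f)) (e x)) ∧
      -- `e` intertwines the right `R`-actions of the two bimodules:
      (∀ (f : R) (x : TensorProduct R R (TensorProduct ↥(fixedSubring s) R R)),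
          e ((LinearMap.lTensor R (mulSecond (fixedSubring s) f)) x) =
            (w.symm f) • e x) := by
  rw [← comap_fixedSubring]
  exact tw_tensor_bimodule_iso_general w (fixedSubring s)

end
end
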